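/- Let u ∈ C⁴(B_R(0)), B_R(0) ⊂ ℝ², be a convex solution of det ∇²u / (1 + |∇u|²)² = f(x) in B_R(0), where f ∈ C²(B_R(0)) satisfies 0 < m ≤ f ≤ M. Then |∇²u(0)| ≤ C, where C depends only on m, M, R, sup|∇f|, sup|∇²f|, and sup|∇u|. -/

import Mathlib

open Metric
open scoped BigOperators

/-- The partial derivative in the i-th coordinate direction. -/
noncomputable def pd (i : Fin 2) (f : EuclideanSpace ℝ (Fin 2) → ℝ)
    (x : EuclideanSpace ℝ (Fin 2)) : ℝ :=
  fderiv ℝ f x (EuclideanSpace.single i 1)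

open Filter Topology

abbrev E2 := EuclideanSpace ℝ (Fin 2)

noncomputable def dd (v : E2) (g : E2 → ℝ) (x : E2) : ℝ := fderiv ℝ g x v

theorem dd_contDiffOn {n : ℕ} {B : Set E2} (hB : IsOpen B) {g : E2 → ℝ} (v : E2)
    (hg : ContDiffOn ℝ ((n + 1 : ℕ) : WithTop ℕ∞) g B) : ContDiffOn ℝ (n : WithTop ℕ∞) (dd v g) B := by
  have h1 : ContDiffOn ℝ (n : WithTop ℕ∞) (fderiv ℝ g) B :=
    hg.fderiv_of_isOpen hB (by push_cast; exact le_rfl)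
  exact h1.clm_apply contDiffOn_const

theorem diffAt_of {n : ℕ} {B : Set E2} (hB : IsOpen B) {g : E2 → ℝ}
    (hg : ContDiffOn ℝ ((n + 1 : ℕ) : WithTop ℕ∞) g B) {x : E2} (hx : x ∈ B) :
    DifferentiableAt ℝ g x := by
  have := (hg.contDiffAt (hB.mem_nhds hx)).differentiableAt (by simp)
  exact this

theorem line_deriv {g : E2 → ℝ} {x v : E2} {s : ℝ} (hg : DifferentiableAt ℝ g (x + s • v)) :
    HasDerivAt (fun s : ℝ => g (x + s • v)) (dd v g (x + s • v)) s := by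
  have h1 : HasDerivAt (fun s : ℝ => x + s • v) v s := by
    simpa using ((hasDerivAt_id s).smul_const v).const_add x
  exact hg.hasFDerivAt.comp_hasDerivAt s h1

theorem dd_dd {n : ℕ} {B : Set E2} (hB : IsOpen B) {g : E2 → ℝ}
    (hg : ContDiffOn ℝ ((n + 2 : ℕ) : WithTop ℕ∞) g B) {x : E2} (hx : x ∈ B) (v w : E2) :
    dd v (dd w g) x = fderiv ℝ (fderiv ℝ g) x v w := by
  have h1 : ContDiffOn ℝ ((n + 1 : ℕ) : WithTop ℕ∞) (fderiv ℝ g) B :=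
    hg.fderiv_of_isOpen hB (by push_cast; rw [add_assoc]; norm_num)
  have h2 : DifferentiableAt ℝ (fderiv ℝ g) x :=
    (h1.contDiffAt (hB.mem_nhds hx)).differentiableAt (by simp)
  unfold dd
  rw [fderiv_clm_apply h2 (differentiableAt_const w)]
  simp

theorem dd_symm {n : ℕ} {B : Set E2} (hB : IsOpen B) {g : E2 → ℝ}
    (hg : ContDiffOn ℝ ((n + 2 : ℕ) : WithTop ℕ∞) g B) {x : E2} (hx : x ∈ B) (v w : E2) :
    dd v (dd w g) x = dd w (dd v g) x := by
  rw [dd_dd hB hg hx, dd_dd hB hg hx]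
  have := (hg.contDiffAt (hB.mem_nhds hx)).isSymmSndFDerivAt (by simp)
  exact this v w

theorem dd_congr {B : Set E2} (hB : IsOpen B) {g h : E2 → ℝ} (hgh : ∀ x ∈ B, g x = h x)
    {x : E2} (hx : x ∈ B) (v : E2) : dd v g x = dd v h x := by
  unfold dd
  rw [Filter.EventuallyEq.fderiv_eq]
  filter_upwards [hB.mem_nhds hx] with y hy using hgh y hy

theorem max_test {φ φ1 : ℝ → ℝ} {φ2 : ℝ} (hm : IsLocalMax φ 0)
    (h1 : ∀ᶠ s in 𝓝 (0:ℝ), HasDerivAt φ (φ1 s) s) (h2 : HasDerivAt φ1 φ2 0) :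
    φ1 0 = 0 ∧ φ2 ≤ 0 := by
  have h0 := h1.self_of_nhds
  have hz : φ1 0 = 0 := by rw [← h0.deriv]; exact hm.deriv_eq_zero
  refine ⟨hz, ?_⟩
  by_contra! hpos
  have he : deriv φ =ᶠ[𝓝 0] φ1 := by filter_upwards [h1] with s hs using hs.deriv
  have hd2 : deriv (deriv φ) 0 = φ2 := by rw [he.deriv_eq, h2.deriv]
  have hmin := isLocalMin_of_deriv_deriv_pos (f := φ) (x₀ := 0) (by rw [hd2]; exact hpos)
    (by rw [h0.deriv, hz]) h0.continuousAt
  have hc : φ =ᶠ[𝓝 0] fun _ => φ 0 := by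
    filter_upwards [hm, hmin] with s a b using le_antisymm a b
  have h3 : deriv φ =ᶠ[𝓝 0] fun _ => 0 := by
    have := hc.deriv
    simpa using this
  have : deriv (deriv φ) 0 = 0 := by rw [h3.deriv_eq]; simp
  linarith

theorem log_test {p p1 q q1 h h1 : ℝ → ℝ} {p2 q2 h2 : ℝ} 
    (hp : ∀ᶠ s in 𝓝 (0:ℝ), HasDerivAt p (p1 s) s) (hp2 : HasDerivAt p1 p2 0)
    (hq : ∀ᶠ s in 𝓝 (0:ℝ), HasDerivAt q (q1 s) s) (hq2 : HasDerivAt q1 q2 0)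
    (hh : ∀ᶠ s in 𝓝 (0:ℝ), HasDerivAt h (h1 s) s) (hh2 : HasDerivAt h1 h2 0)
    (p0 : 0 < p 0) (q0 : 0 < q 0)
    (hm : IsLocalMax (fun s => q s * p s * Real.exp (h s)) 0) :
    p1 0 / p 0 + q1 0 / q 0 + h1 0 = 0 ∧
    p2 / p 0 - (p1 0 / p 0) ^ 2 + (q2 / q 0 - (q1 0 / q 0) ^ 2) + h2 ≤ 0 := by
  have pp : ∀ᶠ s in 𝓝 (0:ℝ), 0 < p s := hp.self_of_nhds.continuousAt.eventually (lt_mem_nhds p0)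
  have qq : ∀ᶠ s in 𝓝 (0:ℝ), 0 < q s := hq.self_of_nhds.continuousAt.eventually (lt_mem_nhds q0)
  have hm' : IsLocalMax (fun s => Real.log (p s) + Real.log (q s) + h s) 0 := by
    filter_upwards [hm, pp, qq] with s hs hps hqs
    have := Real.log_le_log (by positivity) hs
    rw [Real.log_mul (by positivity) (by positivity), Real.log_mul (by positivity) (by positivity),
      Real.log_mul (by positivity) (by positivity), Real.log_mul (by positivity) (by positivity),
      Real.log_exp, Real.log_exp] at this
    linarith
  have key := max_test (φ1 := fun s => p1 s / p s + q1 s / q s + h1 s)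
    (φ2 := (p2 * p 0 - p1 0 * p1 0) / p 0 ^ 2 + (q2 * q 0 - q1 0 * q1 0) / q 0 ^ 2 + h2) hm' ?_ ?_
  · refine ⟨key.1, ?_⟩
    have e1 : ∀ a b c : ℝ, 0 < c → (a * c - b * b) / c ^ 2 = a / c - (b / c) ^ 2 := by
      intro a b c hc; field_simp
    rw [e1 _ _ _ p0, e1 _ _ _ q0] at key
    exact key.2
  · filter_upwards [hp, hq, hh, pp, qq] with s a b c d e
    exact ((a.log d.ne').add (b.log e.ne')).add c
  · exact ((hp2.div hp.self_of_nhds p0.ne').add (hq2.div hq.self_of_nhds q0.ne')).add hh2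

theorem alg_id {l k f f1 f2 f11 p1 p2 n a b t111 t112 t122 t222 q1111 q1122 W : ℝ}
    (hl : 0 < l)
    (m1 : t111 / l + a + p1 * l = 0)
    (m1' : q1111 / l - (t111 / l) ^ 2 + (-l / n - a ^ 2) + (l ^ 2 + p1 * t111 + p2 * t112) ≤ 0)
    (m2 : t112 / l + b + p2 * k = 0)
    (m2' : q1122 / l - (t112 / l) ^ 2 + (-k / n - b ^ 2) + (k ^ 2 + p1 * t122 + p2 * t222) ≤ 0)
    (hk : 0 < k)
    (e0 : l * k = f * W ^ 2)
    (e1 : t111 * k + l * t122 = f1 * W ^ 2 + 4 * f * W * p1 * l)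
    (e2 : t112 * k + l * t222 = f2 * W ^ 2 + 4 * f * W * p2 * k)
    (e11 : q1111 * k + 2 * t111 * t122 + l * q1122 - 2 * t112 ^ 2 =
      f11 * W ^ 2 + 8 * f1 * W * p1 * l +
        f * (8 * p1 ^ 2 * l ^ 2 + 4 * W * (l ^ 2 + p1 * t111 + p2 * t112))) :
    f11 * W ^ 2 / l + 8 * f1 * W * p1 + 8 * f * p1 ^ 2 * l + 4 * f * W * l
      + (4 * f * W * p1 * a + 4 * f * W * p1 ^ 2 * l - 4 * f * W * p2 * b)
      + 2 * (a + p1 * l) * f1 * W ^ 2 / l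
      + (2 * f * W ^ 2 * p1 * a + 2 * f * W ^ 2 * p2 * b + k * p1 ^ 2 * l ^ 2 + l * p2 ^ 2 * k ^ 2)
      - 2 * f * W ^ 2 / n + f * W ^ 2 * (l + k) + p1 * f1 * W ^ 2 + p2 * f2 * W ^ 2
      + 4 * f * W * p1 ^ 2 * l ≤ 0 := by
  have T1 : t111 = -l * (a + p1 * l) := by field_simp at m1; linarith
  have T2 : t112 = -l * (b + p2 * k) := by field_simp at m2; linarith
  have H : k * (q1111 / l - (t111 / l) ^ 2 + (-l / n - a ^ 2) + (l ^ 2 + p1 * t111 + p2 * t112))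
    + l * (q1122 / l - (t112 / l) ^ 2 + (-k / n - b ^ 2) + (k ^ 2 + p1 * t122 + p2 * t222)) ≤ 0 := by
    have := mul_nonneg hk.le (neg_nonneg.2 m1')
    have := mul_nonneg hl.le (neg_nonneg.2 m2')
    linarith
  have Q : q1122 = (f11 * W ^ 2 + 8 * f1 * W * p1 * l +
        f * (8 * p1 ^ 2 * l ^ 2 + 4 * W * (l ^ 2 + p1 * t111 + p2 * t112))
        - (q1111 * k + 2 * t111 * t122 - 2 * t112 ^ 2)) / l := by field_simp; linarith
  have T3 : t122 = (f1 * W ^ 2 + 4 * f * W * p1 * l - t111 * k) / l := by field_simp; linarith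
  have T4 : t222 = (f2 * W ^ 2 + 4 * f * W * p2 * k - t112 * k) / l := by field_simp; linarith
  have K' : k = f * W ^ 2 / l := by field_simp; linarith
  refine le_of_eq_of_le ?_ H
  rw [Q, T4, T3, T2, T1, K']
  have hl' := hl.ne'
  rcases eq_or_ne n 0 with rfl | hn
  · simp only [div_zero]; field_simp; ring
  field_simp
  ring

theorem alg_bound {l k f f1 f2 f11 p1 p2 n n1 n2 W m M K K1 K2 W0 : ℝ} (hl : 1 ≤ l) (hk : 0 < k)
    (hn : 0 < n) (hm : 0 < m) (hmf : m ≤ f) (hfM : f ≤ M) (hK1 : 0 ≤ K1) (hK2 : 0 ≤ K2)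
    (hp1 : |p1| ≤ K) (hp2 : |p2| ≤ K) (hn1 : |n1| ≤ 2 * K) (hn2 : |n2| ≤ 2 * K)
    (hf1 : |f1| ≤ K1) (hf2 : |f2| ≤ K1) (hf11 : |f11| ≤ K2) (hW : 1 ≤ W) (hW0 : W ≤ W0)
    (H : f11 * W ^ 2 / l + 8 * f1 * W * p1 + 8 * f * p1 ^ 2 * l + 4 * f * W * l
      + (4 * f * W * p1 * (n1 / n) + 4 * f * W * p1 ^ 2 * l - 4 * f * W * p2 * (n2 / n))
      + 2 * ((n1 / n) + p1 * l) * f1 * W ^ 2 / l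
      + (2 * f * W ^ 2 * p1 * (n1 / n) + 2 * f * W ^ 2 * p2 * (n2 / n) + k * p1 ^ 2 * l ^ 2 + l * p2 ^ 2 * k ^ 2)
      - 2 * f * W ^ 2 / n + f * W ^ 2 * (l + k) + p1 * f1 * W ^ 2 + p2 * f2 * W ^ 2
      + 4 * f * W * p1 ^ 2 * l ≤ 0) :
    m * (n * l) ≤ n * (K2 * W0 ^ 2 + 8 * K1 * W0 * K + 4 * K1 * W0 ^ 2 * K) +
      (2 * M * W0 ^ 2 + 16 * M * W0 * K ^ 2 + 8 * M * W0 ^ 2 * K ^ 2 + 4 * K1 * W0 ^ 2 * K) := by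
  have hK : 0 ≤ K := (abs_nonneg _).trans hp1
  have l0 : 0 < l := by linarith
  have f0 : 0 < f := by linarith
  have M0 : 0 < M := by linarith
  have W1 : 0 < W := by linarith
  have W2 : 0 < W0 := by linarith
  have b1 : |f11 * W ^ 2 / l| ≤ K2 * W0 ^ 2 := by
    rw [abs_div, abs_mul, abs_of_pos l0, abs_of_pos (by positivity : 0 < W ^ 2)]
    refine (div_le_self (by positivity) hl).trans ?_
    gcongr
  have b2 : |f1 * W * p1| ≤ K1 * W0 * K := by
    rw [abs_mul, abs_mul, abs_of_pos W1]; gcongr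
  have b3 : |f * W * p1 * n1| ≤ M * W0 * K * (2 * K) := by
    rw [abs_mul, abs_mul, abs_mul, abs_of_pos W1, abs_of_pos f0]; gcongr
  have b4 : |f * W * p2 * n2| ≤ M * W0 * K * (2 * K) := by
    rw [abs_mul, abs_mul, abs_mul, abs_of_pos W1, abs_of_pos f0]; gcongr
  have b5 : |f * W ^ 2 * p1 * n1| ≤ M * W0 ^ 2 * K * (2 * K) := by
    rw [abs_mul, abs_mul, abs_mul, abs_of_pos (by positivity : 0 < W ^ 2), abs_of_pos f0]; gcongr
  have b6 : |f * W ^ 2 * p2 * n2| ≤ M * W0 ^ 2 * K * (2 * K) := by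
    rw [abs_mul, abs_mul, abs_mul, abs_of_pos (by positivity : 0 < W ^ 2), abs_of_pos f0]; gcongr
  have b7 : |n1 * f1 * W ^ 2 / l| ≤ 2 * K * K1 * W0 ^ 2 := by
    rw [abs_div, abs_mul, abs_mul, abs_of_pos l0, abs_of_pos (by positivity : 0 < W ^ 2)]
    refine (div_le_self (by positivity) hl).trans ?_
    gcongr
  have b8 : |p1 * f1 * W ^ 2| ≤ K * K1 * W0 ^ 2 := by
    rw [abs_mul, abs_mul, abs_of_pos (by positivity : 0 < W ^ 2)]; gcongr
  have b9 : |p2 * f2 * W ^ 2| ≤ K * K1 * W0 ^ 2 := by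
    rw [abs_mul, abs_mul, abs_of_pos (by positivity : 0 < W ^ 2)]; gcongr
  have b10 : f * W ^ 2 ≤ M * W0 ^ 2 := by gcongr
  have b11 : m * l ≤ f * W ^ 2 * l := by
    have : 1 ≤ W ^ 2 := one_le_pow₀ hW
    have : m * 1 ≤ f * W ^ 2 := by gcongr
    nlinarith
  have g1 : 0 ≤ 8 * f * p1 ^ 2 * l + 4 * f * W * l + 4 * f * W * p1 ^ 2 * l + k * p1 ^ 2 * l ^ 2 +
    l * p2 ^ 2 * k ^ 2 + f * W ^ 2 * k + 4 * f * W * p1 ^ 2 * l := by positivity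
  have H2 : f * W ^ 2 * l + f11 * W ^ 2 / l + 8 * (f1 * W * p1) + 3 * (p1 * f1 * W ^ 2) + p2 * f2 * W ^ 2
     + (4 * (f * W * p1 * n1) - 4 * (f * W * p2 * n2) + 2 * (f * W ^ 2 * p1 * n1) + 2 * (f * W ^ 2 * p2 * n2)
       + 2 * (n1 * f1 * W ^ 2 / l) - 2 * (f * W ^ 2)) / n ≤ 0 := by
    refine le_trans (le_of_eq ?_) (sub_nonpos.2 (H.trans g1))
    field_simp
    ring
  rw [abs_le] at *
  have H3 : n * (f * W ^ 2 * l + f11 * W ^ 2 / l + 8 * (f1 * W * p1) + 3 * (p1 * f1 * W ^ 2) + p2 * f2 * W ^ 2)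
     + (4 * (f * W * p1 * n1) - 4 * (f * W * p2 * n2) + 2 * (f * W ^ 2 * p1 * n1) + 2 * (f * W ^ 2 * p2 * n2)
       + 2 * (n1 * f1 * W ^ 2 / l) - 2 * (f * W ^ 2)) ≤ 0 := by
    have := mul_nonpos_of_nonneg_of_nonpos hn.le H2
    rw [mul_add, mul_div_cancel₀ _ hn.ne'] at this
    exact this
  have H4 : n * (m * l - (K2 * W0 ^ 2 + 8 * K1 * W0 * K + 4 * K1 * W0 ^ 2 * K)) ≤ 
    n * (f * W ^ 2 * l + f11 * W ^ 2 / l + 8 * (f1 * W * p1) + 3 * (p1 * f1 * W ^ 2) + p2 * f2 * W ^ 2) := by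
    apply mul_le_mul_of_nonneg_left _ hn.le
    linarith [b1.1, b2.1, b8.1, b9.1]
  linarith [b3.1, b4.2, b5.1, b6.1, b7.1]

theorem eq_diff1 {P Q S f p q : ℝ → ℝ} {P' Q' S' f' p' q' s : ℝ}
    (hP : HasDerivAt P P' s) (hQ : HasDerivAt Q Q' s) (hS : HasDerivAt S S' s)
    (hf : HasDerivAt f f' s) (hp : HasDerivAt p p' s) (hq : HasDerivAt q q' s)
    (h : ∀ᶠ t in 𝓝 s, P t * Q t - S t * S t = f t * (1 + p t * p t + q t * q t) ^ 2) :
    P' * Q s + P s * Q' - 2 * S s * S' = f' * (1 + p s * p s + q s * q s) ^ 2 +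
      f s * (2 * (1 + p s * p s + q s * q s) * (2 * p s * p' + 2 * q s * q')) := by
  have h1 := (hP.mul hQ).sub (hS.mul hS)
  have h2 := hf.mul ((((hp.mul hp).const_add 1).add (hq.mul hq)).pow 2)
  have h3 := h1.unique (h2.congr_of_eventuallyEq (by filter_upwards [h] with t ht; simpa using ht))
  simp at h3
  linear_combination h3

theorem eq_diff2 {P Q S f p q P' Q' S' f' p' q' : ℝ → ℝ} {P2 Q2 S2 f2 p2 q2 : ℝ}
    (hP : ∀ᶠ s in 𝓝 (0:ℝ), HasDerivAt P (P' s) s) (hQ : ∀ᶠ s in 𝓝 (0:ℝ), HasDerivAt Q (Q' s) s)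
    (hS : ∀ᶠ s in 𝓝 (0:ℝ), HasDerivAt S (S' s) s)
    (hf : ∀ᶠ s in 𝓝 (0:ℝ), HasDerivAt f (f' s) s) (hp : ∀ᶠ s in 𝓝 (0:ℝ), HasDerivAt p (p' s) s)
    (hq : ∀ᶠ s in 𝓝 (0:ℝ), HasDerivAt q (q' s) s)
    (hP2 : HasDerivAt P' P2 0) (hQ2 : HasDerivAt Q' Q2 0) (hS2 : HasDerivAt S' S2 0)
    (hf2 : HasDerivAt f' f2 0) (hp2 : HasDerivAt p' p2 0) (hq2 : HasDerivAt q' q2 0)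
    (h : ∀ᶠ t in 𝓝 (0:ℝ), P t * Q t - S t * S t = f t * (1 + p t * p t + q t * q t) ^ 2) :
    P2 * Q 0 + 2 * P' 0 * Q' 0 + P 0 * Q2 - 2 * S' 0 ^ 2 - 2 * S 0 * S2 =
      f2 * (1 + p 0 * p 0 + q 0 * q 0) ^ 2 +
      2 * f' 0 * (2 * (1 + p 0 * p 0 + q 0 * q 0) * (2 * p 0 * p' 0 + 2 * q 0 * q' 0)) +
      f 0 * (2 * (2 * p 0 * p' 0 + 2 * q 0 * q' 0) ^ 2 + 2 * (1 + p 0 * p 0 + q 0 * q 0) *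
        (2 * p' 0 ^ 2 + 2 * q' 0 ^ 2 + 2 * p 0 * p2 + 2 * q 0 * q2)) := by
  have key : ∀ᶠ s in 𝓝 (0:ℝ), P' s * Q s + P s * Q' s - 2 * (S s * S' s) =
      f' s * (1 + p s * p s + q s * q s) ^ 2 +
      f s * ((2 * (1 + p s * p s + q s * q s)) * (2 * (p s * p' s) + 2 * (q s * q' s))) := by
    filter_upwards [hP, hQ, hS, hf, hp, hq, h.eventually_nhds] with s a b c d e g i
    have := eq_diff1 a b c d e g i
    linear_combination this
  have P0 := hP.self_of_nhds
  have Q0 := hQ.self_of_nhds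
  have S0 := hS.self_of_nhds
  have f0 := hf.self_of_nhds
  have p0 := hp.self_of_nhds
  have q0 := hq.self_of_nhds
  have h1 := ((hP2.mul Q0).add (P0.mul hQ2)).sub ((S0.mul hS2).const_mul 2)
  have hW := ((p0.mul p0).const_add 1).add (q0.mul q0)
  have h2 := (hf2.mul (hW.pow 2)).add
    (f0.mul ((hW.const_mul 2).mul (((p0.mul hp2).const_mul 2).add ((q0.mul hq2).const_mul 2))))
  have h3 := h1.unique (h2.congr_of_eventuallyEq
    (by filter_upwards [key] with t ht; simpa using ht))
  simp at h3
  linear_combination h3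

theorem line_mem {B : Set E2} (hB : IsOpen B) {x : E2} (hx : x ∈ B) (v : E2) :
    ∀ᶠ s in 𝓝 (0:ℝ), x + s • v ∈ B := by
  have hc : ContinuousAt (fun s : ℝ => x + s • v) 0 := by fun_prop
  exact hc.eventually (by simpa using hB.mem_nhds hx)

theorem line_deriv_ev {n : ℕ} {B : Set E2} (hB : IsOpen B) {g : E2 → ℝ}
    (hg : ContDiffOn ℝ ((n + 1 : ℕ) : WithTop ℕ∞) g B) {x : E2} (hx : x ∈ B) (v : E2) :
    ∀ᶠ s in 𝓝 (0:ℝ), HasDerivAt (fun s : ℝ => g (x + s • v)) (dd v g (x + s • v)) s := by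
  filter_upwards [line_mem hB hx v] with s hs
  exact line_deriv (diffAt_of hB hg hs)

theorem line_deriv0 {n : ℕ} {B : Set E2} (hB : IsOpen B) {g : E2 → ℝ}
    (hg : ContDiffOn ℝ ((n + 1 : ℕ) : WithTop ℕ∞) g B) {x : E2} (hx : x ∈ B) (v : E2) :
    HasDerivAt (fun s : ℝ => g (x + s • v)) (dd v g x) 0 := by
  simpa using (line_deriv_ev hB hg hx v).self_of_nhds

set_option maxHeartbeats 1000000 in
theorem pog_point {B : Set E2} (hB : IsOpen B) {u f : E2 → ℝ} {x e e' : E2} (hx : x ∈ B)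
    (hu : ContDiffOn ℝ ((4 : ℕ) : WithTop ℕ∞) u B) (hf : ContDiffOn ℝ ((2 : ℕ) : WithTop ℕ∞) f B)
    (heq : ∀ y ∈ B, dd e (dd e u) y * dd e' (dd e' u) y - dd e (dd e' u) y * dd e (dd e' u) y =
      f y * (1 + dd e u y * dd e u y + dd e' u y * dd e' u y) ^ 2)
    (h12 : dd e (dd e' u) x = 0) {η : E2 → ℝ} {c : ℝ} {T : E2 →L[ℝ] ℝ}
    (hη : ∀ y, η y = c - u y + T y) (hη0 : 0 < η x)
    (hm : IsLocalMax (fun y => η y * dd e (dd e u) y *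
      Real.exp ((dd e u y * dd e u y + dd e' u y * dd e' u y) / 2)) x)
    {m M K K1 K2 W0 : ℝ} (hl : 1 ≤ dd e (dd e u) x)
    (hm0 : 0 < m) (hmf : m ≤ f x) (hfM : f x ≤ M) (hK1 : 0 ≤ K1) (hK2 : 0 ≤ K2)
    (hp1 : |dd e u x| ≤ K) (hp2 : |dd e' u x| ≤ K) (hn1 : |dd e u x - T e| ≤ 2 * K)
    (hn2 : |dd e' u x - T e'| ≤ 2 * K)
    (hf1 : |dd e f x| ≤ K1) (hf2 : |dd e' f x| ≤ K1) (hf11 : |dd e (dd e f) x| ≤ K2)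
    (hW0 : 1 + dd e u x * dd e u x + dd e' u x * dd e' u x ≤ W0) :
    m * (η x * dd e (dd e u) x) ≤ η x * (K2 * W0 ^ 2 + 8 * K1 * W0 * K + 4 * K1 * W0 ^ 2 * K) +
      (2 * M * W0 ^ 2 + 16 * M * W0 * K ^ 2 + 8 * M * W0 ^ 2 * K ^ 2 + 4 * K1 * W0 ^ 2 * K) := by
  have hu1 : ∀ v, ContDiffOn ℝ ((3 : ℕ) : WithTop ℕ∞) (dd v u) B := fun v => dd_contDiffOn hB v hu
  have hu2 : ∀ v w, ContDiffOn ℝ ((2 : ℕ) : WithTop ℕ∞) (dd w (dd v u)) B :=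
    fun v w => dd_contDiffOn hB w (hu1 v)
  have hu3 : ∀ v w z, ContDiffOn ℝ ((1 : ℕ) : WithTop ℕ∞) (dd z (dd w (dd v u))) B :=
    fun v w z => dd_contDiffOn hB z (hu2 v w)
  have hf' : ∀ v, ContDiffOn ℝ ((1 : ℕ) : WithTop ℕ∞) (dd v f) B := fun v => dd_contDiffOn hB v hf
  have x0 : ∀ v : E2, x + (0:ℝ) • v = x := by intro v; simp
  have h21 : dd e' (dd e u) x = 0 := by rw [dd_symm hB hu hx, h12]
  -- maximum test in direction v
  have test : ∀ v : E2, _ := fun v => log_test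
    (line_deriv_ev hB (hu2 e e) hx v) (line_deriv0 hB (hu3 e e v) hx v)
    (q := fun s => η (x + s • v)) (q1 := fun s => - dd v u (x + s • v) + T v)
    (q2 := - dd v (dd v u) x)
    (by
      filter_upwards [line_deriv_ev hB hu hx v] with s hs
      have h1 : HasDerivAt (fun s : ℝ => x + s • v) v s := by
        simpa using ((hasDerivAt_id s).smul_const v).const_add x
      have h2 : HasDerivAt (fun s : ℝ => T (x + s • v)) (T v) s :=
        T.hasFDerivAt.comp_hasDerivAt s h1
      have h3 := (hs.const_sub c).add h2
      refine h3.congr_of_eventuallyEq ?_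
      filter_upwards with t
      simp [hη])
    ((line_deriv0 hB (hu1 v) hx v).neg.add_const (T v))
    (h := fun s => (dd e u (x + s • v) * dd e u (x + s • v) +
      dd e' u (x + s • v) * dd e' u (x + s • v)) / 2)
    (h1 := fun s => dd e u (x + s • v) * dd v (dd e u) (x + s • v) +
      dd e' u (x + s • v) * dd v (dd e' u) (x + s • v))
    (by
      filter_upwards [line_deriv_ev hB (hu1 e) hx v, line_deriv_ev hB (hu1 e') hx v] with s hs hs'
      have := ((hs.mul hs).add (hs'.mul hs')).div_const 2
      refine this.congr_deriv ?_
      ring)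
    (((line_deriv_ev hB (hu1 e) hx v).self_of_nhds.mul (line_deriv0 hB (hu2 e v) hx v)).add
      ((line_deriv_ev hB (hu1 e') hx v).self_of_nhds.mul (line_deriv0 hB (hu2 e' v) hx v)))
    (by simp only [x0]; linarith) (by simp only [x0]; exact hη0)
    (by
      have hc : ContinuousAt (fun s : ℝ => x + s • v) 0 := by fun_prop
      have := hc.eventually (p := fun y => η y * dd e (dd e u) y *
        Real.exp ((dd e u y * dd e u y + dd e' u y * dd e' u y) / 2) ≤ η x * dd e (dd e u) x *
        Real.exp ((dd e u x * dd e u x + dd e' u x * dd e' u x) / 2)) (by simp only [x0]; exact hm)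
      filter_upwards [this] with s hs
      simpa only [x0] using hs)
  have t1 := test e
  have t2 := test e'
  clear test
  simp only [x0] at t1 t2
  have E1 := eq_diff1 (line_deriv0 hB (hu2 e e) hx e) (line_deriv0 hB (hu2 e' e') hx e)
    (line_deriv0 hB (hu2 e' e) hx e) (line_deriv0 hB hf hx e) (line_deriv0 hB (hu1 e) hx e)
    (line_deriv0 hB (hu1 e') hx e)
    (by filter_upwards [line_mem hB hx e] with s hs using heq _ hs)
  have E2 := eq_diff1 (line_deriv0 hB (hu2 e e) hx e') (line_deriv0 hB (hu2 e' e') hx e')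
    (line_deriv0 hB (hu2 e' e) hx e') (line_deriv0 hB hf hx e') (line_deriv0 hB (hu1 e) hx e')
    (line_deriv0 hB (hu1 e') hx e')
    (by filter_upwards [line_mem hB hx e'] with s hs using heq _ hs)
  have E11 := eq_diff2 (line_deriv_ev hB (hu2 e e) hx e) (line_deriv_ev hB (hu2 e' e') hx e)
    (line_deriv_ev hB (hu2 e' e) hx e) (line_deriv_ev hB hf hx e) (line_deriv_ev hB (hu1 e) hx e)
    (line_deriv_ev hB (hu1 e') hx e)
    (line_deriv0 hB (hu3 e e e) hx e) (line_deriv0 hB (hu3 e' e' e) hx e)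
    (line_deriv0 hB (hu3 e' e e) hx e) (line_deriv0 hB (hf' e) hx e) (line_deriv0 hB (hu2 e e) hx e)
    (line_deriv0 hB (hu2 e' e) hx e)
    (by filter_upwards [line_mem hB hx e] with s hs using heq _ hs)
  simp only [x0] at E1 E2 E11
  have E0 := heq x hx
  -- commutation
  have c1 : dd e (dd e (dd e' u)) x = dd e' (dd e (dd e u)) x := by
    rw [dd_congr hB (fun y hy => dd_symm hB hu hy e e') hx e, dd_symm hB (hu1 e) hx]
  have c2 : dd e (dd e' (dd e' u)) x = dd e' (dd e' (dd e u)) x := by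
    rw [dd_symm hB (hu1 e') hx, dd_congr hB (fun y hy => dd_symm hB hu hy e e') hx e']
  have c3 : dd e (dd e (dd e' (dd e' u))) x = dd e' (dd e' (dd e (dd e u))) x := by
    have a1 : ∀ y ∈ B, dd e (dd e' (dd e' u)) y = dd e' (dd e' (dd e u)) y := by
      intro y hy
      rw [dd_symm hB (hu1 e') hy, dd_congr hB (fun y hy => dd_symm hB hu hy e e') hy e']
    rw [dd_congr hB a1 hx e, dd_symm hB (hu2 e e') hx,
      dd_congr hB (fun y hy => dd_symm hB (hu1 e) hy e e') hx e']
  rw [h12] at E0 E1 E2 E11 t1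
  rw [h21] at E2 t2
  rw [c2] at E1 E11
  rw [c1] at E11 t1
  rw [c3] at E11
  have hk : 0 < dd e' (dd e' u) x := by
    have : 0 < dd e (dd e u) x * dd e' (dd e' u) x := by
      have : dd e (dd e u) x * dd e' (dd e' u) x =  f x * (1 + dd e u x * dd e u x + dd e' u x * dd e' u x) ^ 2 := by
        linarith
      rw [this]
      have := mul_self_nonneg (dd e u x)
      have := mul_self_nonneg (dd e' u x)
      have : 0 < f x := by linarith
      positivity
    exact (mul_pos_iff_of_pos_left (by linarith)).1 this
  have hl0 : 0 < dd e (dd e u) x := by linarith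
  generalize dd e (dd e u) x = l at *
  generalize dd e' (dd e' u) x = k at *
  generalize dd e u x = p1 at *
  generalize dd e' u x = p2 at *
  generalize η x = n at *
  have hW : 1 ≤ 1 + p1 * p1 + p2 * p2 := by linarith only [mul_self_nonneg p1, mul_self_nonneg p2]
  refine alg_bound (W := 1 + p1 * p1 + p2 * p2) (n1 := -p1 + T e) (n2 := -p2 + T e') (l := l) (k := k)
    hl hk hη0 hm0 hmf hfM hK1 hK2 hp1 hp2
    (by rw [show -p1 + T e = -(p1 - T e) by ring, abs_neg]; exact hn1)
    (by rw [show -p2 + T e' = -(p2 - T e') by ring, abs_neg]; exact hn2)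
    hf1 hf2 hf11 hW hW0 ?_
  apply alg_id (t111 := dd e (dd e (dd e u)) x) (t112 := dd e' (dd e (dd e u)) x)
    (t122 := dd e' (dd e' (dd e u)) x) (t222 := dd e' (dd e' (dd e' u)) x)
    (q1111 := dd e (dd e (dd e (dd e u))) x) (q1122 := dd e' (dd e' (dd e (dd e u))) x) hl0
  · linear_combination t1.1
  · linarith [t1.2]
  · linear_combination t2.1
  · linarith [t2.2]
  · exact hk
  · linear_combination E0
  · linear_combination E1
  · linear_combination E2
  · linear_combination E11

theorem grad_ineq {B : Set E2} {u : E2 → ℝ} (hc : ConvexOn ℝ B u) {x y : E2} (hx : x ∈ B)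
    (hy : y ∈ B) (hd : DifferentiableAt ℝ u x) : u x + fderiv ℝ u x (y - x) ≤ u y := by
  have h1 : ConvexOn ℝ (Set.Icc (0:ℝ) 1) (fun s : ℝ => u (x + s • (y - x))) := by
    have h2 := hc.comp_affineMap (AffineMap.lineMap x y : ℝ →ᵃ[ℝ] E2)
    have h3 := h2.subset (s := Set.Icc (0:ℝ) 1) (fun s hs => hc.1.lineMap_mem hx hy hs) (convex_Icc _ _)
    refine h3.congr ?_
    intro s _
    simp [AffineMap.lineMap_apply, add_comm]
  have h4 : HasDerivAt (fun s : ℝ => u (x + s • (y - x))) (fderiv ℝ u x (y - x)) 0 := by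
    have := line_deriv (g := u) (x := x) (v := y - x) (s := 0) (by simpa using hd)
    simpa [dd] using this
  have h5 := h1.le_slope_of_hasDerivAt (by simp) (by simp) zero_lt_one h4
  simp [slope_def_field] at h5
  simp
  linarith

theorem barrier_deriv {ε c q t : ℝ} (hε : 0 < ε) (ht : 0 < t + ε) :
    HasDerivAt (fun t => ε - c * t + q * ((t + ε) * Real.log ((t + ε) / ε) - t))
      (-c + q * Real.log ((t + ε) / ε)) t := by
  have h0 : HasDerivAt (fun t : ℝ => t + ε) 1 t := (hasDerivAt_id t).add_const ε
  have h1 : HasDerivAt (fun t : ℝ => Real.log ((t + ε) / ε)) (1 / ε / ((t + ε) / ε)) t :=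
    (h0.div_const ε).log (by positivity)
  have h2 := (((hasDerivAt_id t).const_mul c).const_sub ε).add
    (((h0.mul h1).sub (hasDerivAt_id t)).const_mul q)
  refine h2.congr_deriv ?_
  field_simp
  ring

theorem barrier_deriv2 {ε c q t : ℝ} (hε : 0 < ε) (ht : 0 < t + ε) :
    HasDerivAt (fun t => -c + q * Real.log ((t + ε) / ε)) (q / (t + ε)) t := by
  have h0 : HasDerivAt (fun t : ℝ => t + ε) 1 t := (hasDerivAt_id t).add_const ε
  have h1 : HasDerivAt (fun t : ℝ => Real.log ((t + ε) / ε)) (1 / ε / ((t + ε) / ε)) t :=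
    (h0.div_const ε).log (by positivity)
  refine ((h1.const_mul q).const_add (-c)).congr_deriv ?_
  field_simp

/-- constants of the barrier -/
theorem barrier_const (r h m K : ℝ) (hr : 0 < r) (hh : 0 < h) (hm : 0 < m) (hK : 0 ≤ K) :
    ∃ ε A c : ℝ, 0 < ε ∧ ε < h ∧ 0 < A ∧
      (∀ t, 0 ≤ t → ε + K * t < A * (t + ε) * r ^ 2 +
        (ε - c * t + m / (4 * A) * ((t + ε) * Real.log ((t + ε) / ε) - t))) ∧
      (ε + K * h ≤ ε - c * h + m / (4 * A) * ((h + ε) * Real.log ((h + ε) / ε) - h)) ∧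
      (ε - c * ε + m / (4 * A) * ((ε + ε) * Real.log ((ε + ε) / ε) - ε) < 0) := by
  set c := 2 + m / 4 with hc
  set A := 1 + (c + K + 1) / r ^ 2 with hA
  have hc0 : 0 < c := by positivity
  have hA1 : 1 ≤ A := by rw [hA]; have : 0 ≤ (c + K + 1) / r ^ 2 := by positivity
                         linarith
  have hA0 : 0 < A := by linarith
  set q := m / (4 * A) with hq
  have hq0 : 0 < q := by positivity
  have hqm : q ≤ m / 4 := by
    rw [hq]; gcongr; linarith
  set N := 1 + (c + K) / q with hN
  have hN0 : 0 < N := by positivity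
  refine ⟨h * Real.exp (-N), A, c, by positivity, ?_, hA0, ?_, ?_, ?_⟩
  · have : Real.exp (-N) < 1 := by rw [Real.exp_lt_one_iff]; linarith
    nlinarith
  · generalize hε : h * Real.exp (-N) = ε
    have ε0 : 0 < ε := by rw [← hε]; positivity
    intro t ht
    have h1 : 0 ≤ (t + ε) * Real.log ((t + ε) / ε) - t := by
      have := Real.one_sub_inv_le_log_of_pos (x := (t + ε) / ε) (by positivity)
      have h2 : (t + ε) * (1 - ((t + ε) / ε)⁻¹) = t := by field_simp; ring
      nlinarith [mul_le_mul_of_nonneg_left this (by positivity : 0 ≤ t + ε)]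
    have h2 : A * (t + ε) * r ^ 2 = (r ^ 2 + (c + K + 1)) * (t + ε) := by
      rw [hA]; field_simp
    rw [h2]
    have h3 : 0 ≤ r ^ 2 * (t + ε) := by positivity
    have h4 : 0 < (c + K + 1) * ε := by positivity
    nlinarith [mul_nonneg hq0.le h1]
  · generalize hε : h * Real.exp (-N) = ε
    have ε0 : 0 < ε := by rw [← hε]; positivity
    have h1 : N ≤ Real.log ((h + ε) / ε) := by
      rw [Real.le_log_iff_exp_le (by positivity), le_div_iff₀ ε0, ← hε, mul_comm, mul_assoc,
        ← Real.exp_add]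
      simp
      positivity
    have h2 : h * N ≤ (h + ε) * Real.log ((h + ε) / ε) := by
      gcongr
      linarith
    have h3 : q * (h * N - h) = (c + K) * h := by rw [hN]; field_simp; ring
    nlinarith
  · generalize hε : h * Real.exp (-N) = ε
    have ε0 : 0 < ε := by rw [← hε]; positivity
    have h1 : (ε + ε) / ε = 2 := by field_simp; norm_num
    rw [h1]
    have h2 : Real.log 2 ≤ 1 := by linarith [Real.log_two_lt_d9]
    have h4 : (ε + ε) * Real.log 2 - ε ≤ ε := by nlinarith
    have h3 : q * ((ε + ε) * Real.log 2 - ε) ≤ m / 4 * ε := by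
      calc _ ≤ q * ε := by gcongr
        _ ≤ _ := by gcongr
    rw [hc]; nlinarith

theorem frame_mem {R a t : ℝ} {e e' : E2} (he : ‖e‖ = 1) (he' : ‖e'‖ = 1)
    (hi : inner ℝ e e' = 0) (hR : 0 < R) (ha : 0 ≤ a) (ha' : a ≤ R / 2) (ht : 0 ≤ t) (ht' : t ≤ R / 2) :
    a • e + t • e' ∈ ball (0 : E2) R := by
  rw [mem_ball_zero_iff]
  have : ‖a • e + t • e'‖ ^ 2 = a ^ 2 + t ^ 2 := by
    rw [norm_add_sq_real, norm_smul, norm_smul, he, he', inner_smul_left, inner_smul_right, hi]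
    simp
  refine lt_of_pow_lt_pow_left₀ 2 hR.le ?_
  rw [this]
  nlinarith

theorem strict_conv (R m K : ℝ) (hR : 0 < R) (hm : 0 < m) (hK : 0 ≤ K) : ∃ ε > 0,
    ∀ (w : E2 → ℝ) (e e' : E2), ContDiffOn ℝ ((2 : ℕ) : WithTop ℕ∞) w (ball 0 R) →
      ‖e‖ = 1 → ‖e'‖ = 1 → inner ℝ e e' = 0 → (∀ x ∈ ball (0 : E2) R, 0 ≤ w x) →
      (∀ x ∈ ball (0 : E2) R, dd e' w x ≤ K) →
      (∀ x ∈ ball (0 : E2) R, ∀ y ∈ ball (0 : E2) R, w x + fderiv ℝ w x (y - x) ≤ w y) →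
      (∀ x ∈ ball (0 : E2) R, 0 ≤ dd e' (dd e' w) x ∧
        m ≤ dd e (dd e w) x * dd e' (dd e' w) x) →
      (∀ s, 0 ≤ s → s ≤ R / 2 → w (s • e) ≤ ε) → False := by
  obtain ⟨ε, A, c, ε0, εh, A0, H1, H2, H3⟩ := barrier_const (R / 4) (R / 2) m K (by positivity)
    (by positivity) hm hK
  refine ⟨ε, ε0, ?_⟩
  intro w e e' hw he he' hi w0 hwK hgr hdet hseg
  have hB : IsOpen (ball (0 : E2) R) := isOpen_ball
  have hw1 : ∀ v, ContDiffOn ℝ ((1 : ℕ) : WithTop ℕ∞) (dd v w) (ball 0 R) :=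
    fun v => dd_contDiffOn hB v hw
  set b : ℝ → ℝ := fun t => ε - c * t + m / (4 * A) * ((t + ε) * Real.log ((t + ε) / ε) - t) with hb
  set X : ℝ × ℝ → E2 := fun z => (R / 4 + z.1) • e + z.2 • e' with hX
  set g : ℝ × ℝ → ℝ := fun z => w (X z) - (A * (z.2 + ε) * z.1 ^ 2 + b z.2) with hg
  set D : Set (ℝ × ℝ) := Set.Icc (-(R / 4)) (R / 4) ×ˢ Set.Icc 0 (R / 2) with hD
  have hXD : ∀ z ∈ D, X z ∈ ball (0 : E2) R := by
    rintro ⟨s, t⟩ ⟨⟨h1, h2⟩, h3, h4⟩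
    simp only at h1 h2 h3 h4
    exact frame_mem he he' hi hR (by simp only; linarith) (by simp only; linarith) h3 h4
  have hcont : ContinuousOn g D := by
    refine ContinuousOn.sub (hw.continuousOn.comp (by fun_prop) hXD) ?_
    refine ContinuousOn.add (by fun_prop) ?_
    intro z hz
    have hz2 : 0 ≤ z.2 := hz.2.1
    have : ContinuousAt b z.2 := (barrier_deriv ε0 (by linarith)).continuousAt
    exact (this.comp (continuous_snd.continuousAt)).continuousWithinAt
  have hDc : IsCompact D := isCompact_Icc.prod isCompact_Icc
  have hp0 : ((0 : ℝ), ε) ∈ D := ⟨⟨by simp only; linarith, by simp only; linarith⟩, ε0.le, εh.le⟩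
  obtain ⟨⟨s, t⟩, hst, hmax⟩ := hDc.exists_isMaxOn ⟨_, hp0⟩ hcont
  have gpos : 0 < g (s, t) := by
    refine lt_of_lt_of_le ?_ (hmax hp0)
    have := w0 _ (hXD _ hp0)
    simp only [hg, hb] at *
    nlinarith
  obtain ⟨⟨hs1, hs2⟩, ht1, ht2⟩ := hst
  simp only at hs1 hs2 ht1 ht2
  have hXst := hXD (s, t) ⟨⟨hs1, hs2⟩, ht1, ht2⟩
  have hup : w (X (s, t)) ≤ ε + K * t := by
    have h0 := hXD (s, 0) ⟨⟨hs1, hs2⟩, le_rfl, by simp only; linarith⟩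
    have h1 := hgr _ hXst _ h0
    have h2 : X (s, 0) - X (s, t) = (-t) • e' := by simp [hX]
    rw [h2, map_smul, smul_eq_mul] at h1
    have h3 := hwK _ hXst
    have h4 : w (X (s, 0)) ≤ ε := by
      simp only [hX, zero_smul, add_zero]
      exact hseg _ (by linarith) (by linarith)
    unfold dd at h3
    nlinarith [mul_le_mul_of_nonneg_left h3 ht1]
  have gpos' : A * (t + ε) * s ^ 2 + b t < ε + K * t := by
    simp only [hg] at gpos; linarith
  have tpos : 0 < t := by
    rcases ht1.lt_or_eq with h | h
    · exact h
    · exfalso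
      rw [← h] at gpos'
      have : b 0 = ε := by simp [hb, ε0.ne']
      rw [this] at gpos'
      have : 0 ≤ A * (0 + ε) * s ^ 2 := by positivity
      linarith
  have tlt : t < R / 2 := by
    rcases ht2.lt_or_eq with h | h
    · exact h
    · exfalso
      have h5 : b t = b (R / 2) := by rw [h]
      have : 0 ≤ A * (t + ε) * s ^ 2 := by positivity
      have h6 : ε + K * (R / 2) ≤ b (R / 2) := H2
      rw [h5, h] at gpos'
      rw [h] at this
      linarith
  have ssq : s ^ 2 ≠ (R / 4) ^ 2 := by
    intro h
    rw [h] at gpos'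
    exact absurd gpos' (not_lt.2 (H1 t ht1).le)
  have slo : -(R / 4) < s := lt_of_le_of_ne hs1 (by rintro rfl; exact ssq (by ring))
  have shi : s < R / 4 := lt_of_le_of_ne hs2 (by rintro rfl; exact ssq rfl)
  -- s direction
  have r1 := max_test (φ := fun σ => w (X (s, t) + σ • e) - (A * (t + ε) * (s + σ) ^ 2 + b t))
    (φ1 := fun σ => dd e w (X (s, t) + σ • e) - A * (t + ε) * (2 * (s + σ)))
    (φ2 := dd e (dd e w) (X (s, t)) - A * (t + ε) * 2)
    (by
      have hc : ∀ᶠ σ in 𝓝 (0:ℝ), s + σ ∈ Set.Icc (-(R / 4)) (R / 4) := by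
        have : ContinuousAt (fun σ : ℝ => s + σ) 0 := by fun_prop
        exact this.eventually (by simp only [add_zero]; exact Icc_mem_nhds slo shi)
      filter_upwards [hc] with σ hσ
      have := hmax (show (s + σ, t) ∈ D from ⟨hσ, ht1, ht2⟩)
      have e1 : X (s + σ, t) = X (s, t) + σ • e := by simp only [hX]; module
      simp only [hg, e1, Set.mem_ofPred_eq] at this
      simpa using this)
    (by
      filter_upwards [line_deriv_ev hB hw hXst e] with σ hσ
      have h0 : HasDerivAt (fun σ : ℝ => s + σ) 1 σ := (hasDerivAt_id σ).const_add s
      have := hσ.sub (((h0.pow 2).const_mul (A * (t + ε))).add_const (b t))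
      refine this.congr_deriv ?_
      simp)
    (by
      have h0 : HasDerivAt (fun σ : ℝ => s + σ) 1 0 := (hasDerivAt_id 0).const_add s
      have := (line_deriv0 hB (hw1 e) hXst e).sub ((h0.const_mul 2).const_mul (A * (t + ε)))
      refine this.congr_deriv ?_
      simp)
  have r2 := max_test (φ := fun τ => w (X (s, t) + τ • e') - (A * (t + τ + ε) * s ^ 2 + b (t + τ)))
    (φ1 := fun τ => dd e' w (X (s, t) + τ • e') -
      (A * s ^ 2 + (-c + m / (4 * A) * Real.log ((t + τ + ε) / ε))))
    (φ2 := dd e' (dd e' w) (X (s, t)) - m / (4 * A) / (t + ε))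
    (by
      have hc : ∀ᶠ τ in 𝓝 (0:ℝ), t + τ ∈ Set.Icc 0 (R / 2) := by
        have : ContinuousAt (fun σ : ℝ => t + σ) 0 := by fun_prop
        exact this.eventually (by simp only [add_zero]; exact Icc_mem_nhds tpos tlt)
      filter_upwards [hc] with σ hσ
      have := hmax (show (s, t + σ) ∈ D from ⟨⟨hs1, hs2⟩, hσ⟩)
      have e1 : X (s, t + σ) = X (s, t) + σ • e' := by simp only [hX]; module
      simp only [hg, e1, Set.mem_ofPred_eq] at this
      simpa using this)
    (by
      have hc : ∀ᶠ τ in 𝓝 (0:ℝ), t + τ ∈ Set.Icc 0 (R / 2) := by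
        have : ContinuousAt (fun σ : ℝ => t + σ) 0 := by fun_prop
        exact this.eventually (by simp only [add_zero]; exact Icc_mem_nhds tpos tlt)
      filter_upwards [line_deriv_ev hB hw hXst e', hc] with σ hσ hσ2
      have h0 : HasDerivAt (fun σ : ℝ => t + σ) 1 σ := (hasDerivAt_id σ).const_add t
      have hb1 := (barrier_deriv (c := c) (q := m / (4 * A)) (t := t + σ) ε0
        (by linarith [hσ2.1])).comp σ h0
      have := hσ.sub ((((h0.add_const ε).const_mul A).mul_const (s ^ 2)).add hb1)
      refine this.congr_deriv ?_
      simp)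
    (by
      have h0 : HasDerivAt (fun σ : ℝ => t + σ) 1 0 := (hasDerivAt_id 0).const_add t
      have hb1 := (barrier_deriv2 (c := c) (q := m / (4 * A)) (t := t + 0) ε0
        (by linarith)).comp (0:ℝ) h0
      have := (line_deriv0 hB (hw1 e') hXst e').sub (hb1.const_add (A * s ^ 2))
      refine this.congr_deriv ?_
      simp)
  obtain ⟨d1, d2⟩ := hdet _ hXst
  have f1 : dd e (dd e w) (X (s, t)) ≤ A * (t + ε) * 2 := by linarith [r1.2]
  have f2 : dd e' (dd e' w) (X (s, t)) ≤ m / (4 * A) / (t + ε) := by linarith [r2.2]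
  have f3 : dd e (dd e w) (X (s, t)) * dd e' (dd e' w) (X (s, t)) ≤
      A * (t + ε) * 2 * (m / (4 * A) / (t + ε)) := by
    calc _ ≤ A * (t + ε) * 2 * dd e' (dd e' w) (X (s, t)) := by gcongr
      _ ≤ _ := by gcongr
  have f4 : A * (t + ε) * 2 * (m / (4 * A) / (t + ε)) = m / 2 := by
    have : t + ε ≠ 0 := by linarith
    field_simp; norm_num
  linarith

noncomputable def rotv (e : E2) : E2 := !₂[-e 1, e 0]

theorem frame_sq {e : E2} (he : ‖e‖ = 1) : e 0 ^ 2 + e 1 ^ 2 = 1 := by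
  have := EuclideanSpace.norm_sq_eq e
  rw [he] at this
  simp [Fin.sum_univ_two] at this
  linarith

theorem rotv_norm {e : E2} (he : ‖e‖ = 1) : ‖rotv e‖ = 1 := by
  have h : ‖rotv e‖ ^ 2 = 1 := by
    rw [EuclideanSpace.norm_sq_eq]
    simp [rotv, Fin.sum_univ_two]
    linarith [frame_sq he]
  exact (pow_eq_one_iff_of_nonneg (norm_nonneg _) two_ne_zero).1 h

theorem rotv_inner (e : E2) : inner ℝ e (rotv e) = 0 := by
  simp [rotv, PiLp.inner_apply, Fin.sum_univ_two]
  ring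

theorem frame_e (e : E2) : e = e 0 • EuclideanSpace.single (0 : Fin 2) (1:ℝ) +
    e 1 • EuclideanSpace.single (1 : Fin 2) (1:ℝ) := by
  ext i; fin_cases i <;> simp

theorem frame_e' (e : E2) : rotv e = (-e 1) • EuclideanSpace.single (0 : Fin 2) (1:ℝ) +
    e 0 • EuclideanSpace.single (1 : Fin 2) (1:ℝ) := by
  ext i; fin_cases i <;> simp [rotv]

theorem grad_frame {e : E2} (he : ‖e‖ = 1) (u : E2 → ℝ) (x : E2) :
    dd e u x * dd e u x + dd (rotv e) u x * dd (rotv e) u x = ∑ k, (pd k u x) ^ 2 := by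
  have h := frame_sq he
  unfold dd pd
  rw [Fin.sum_univ_two]
  rw [frame_e' e]
  conv_lhs => rw [frame_e e]
  simp only [map_add, map_smul, smul_eq_mul]
  simp
  generalize fderiv ℝ u x (EuclideanSpace.single (0 : Fin 2) (1:ℝ)) = a
  generalize fderiv ℝ u x (EuclideanSpace.single (1 : Fin 2) (1:ℝ)) = b
  linear_combination (a ^ 2 + b ^ 2) * h

theorem hess_frame {B : Set E2} (hB : IsOpen B) {u : E2 → ℝ}
    (hu : ContDiffOn ℝ ((4 : ℕ) : WithTop ℕ∞) u B) {x : E2} (hx : x ∈ B) {e : E2} (he : ‖e‖ = 1) :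
    dd e (dd e u) x * dd (rotv e) (dd (rotv e) u) x -
      dd e (dd (rotv e) u) x * dd e (dd (rotv e) u) x =
    pd 0 (pd 0 u) x * pd 1 (pd 1 u) x - pd 0 (pd 1 u) x * pd 1 (pd 0 u) x := by
  have h := frame_sq he
  have hpd : ∀ i j, pd i (pd j u) x =
      fderiv ℝ (fderiv ℝ u) x (EuclideanSpace.single i 1) (EuclideanSpace.single j 1) :=
    fun i j => dd_dd hB hu hx _ _
  have hs : fderiv ℝ (fderiv ℝ u) x (EuclideanSpace.single 1 1) (EuclideanSpace.single 0 1) =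
      fderiv ℝ (fderiv ℝ u) x (EuclideanSpace.single 0 1) (EuclideanSpace.single 1 1) := by
    have := dd_symm hB hu hx (EuclideanSpace.single 1 1) (EuclideanSpace.single 0 1)
    rwa [dd_dd hB hu hx, dd_dd hB hu hx] at this
  rw [hpd, hpd, hpd, hpd, dd_dd hB hu hx, dd_dd hB hu hx, dd_dd hB hu hx]
  rw [frame_e' e]
  have hL : ∀ c s c' s' : ℝ, fderiv ℝ (fderiv ℝ u) x
      (c • EuclideanSpace.single (0 : Fin 2) (1:ℝ) + s • EuclideanSpace.single (1 : Fin 2) (1:ℝ))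
      (c' • EuclideanSpace.single (0 : Fin 2) (1:ℝ) + s' • EuclideanSpace.single (1 : Fin 2) (1:ℝ))
      = c * c' * fderiv ℝ (fderiv ℝ u) x (EuclideanSpace.single 0 1) (EuclideanSpace.single 0 1)
      + (c * s' + s * c') * fderiv ℝ (fderiv ℝ u) x (EuclideanSpace.single 0 1) (EuclideanSpace.single 1 1)
      + s * s' * fderiv ℝ (fderiv ℝ u) x (EuclideanSpace.single 1 1) (EuclideanSpace.single 1 1) := by
    intro c s c' s'
    simp only [map_add, map_smul, _root_.add_apply, _root_.smul_apply,
      smul_eq_mul, hs]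
    ring
  have h1 := hL (e 0) (e 1) (e 0) (e 1)
  have h2 := hL (e 0) (e 1) (-e 1) (e 0)
  rw [← frame_e e] at h1 h2
  rw [h1, h2, hL, hs]
  generalize fderiv ℝ (fderiv ℝ u) x (EuclideanSpace.single 0 1) (EuclideanSpace.single 0 1) = a
  generalize fderiv ℝ (fderiv ℝ u) x (EuclideanSpace.single 0 1) (EuclideanSpace.single 1 1) = b
  generalize fderiv ℝ (fderiv ℝ u) x (EuclideanSpace.single 1 1) (EuclideanSpace.single 1 1) = d
  generalize e 0 = c at *
  generalize e 1 = s at *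
  linear_combination (a * d - b * b) * (c ^ 2 + s ^ 2 + 1) * h

theorem hess_nonneg {B : Set E2} (hB : IsOpen B) {u : E2 → ℝ}
    (hu : ContDiffOn ℝ ((4 : ℕ) : WithTop ℕ∞) u B) (hc : ConvexOn ℝ B u) {x : E2} (hx : x ∈ B)
    (v : E2) : 0 ≤ dd v (dd v u) x := by
  have hu1 : ContDiffOn ℝ ((3 : ℕ) : WithTop ℕ∞) (dd v u) B := dd_contDiffOn hB v hu
  have := max_test (φ := fun s => s * dd v u x - u (x + s • v))
    (φ1 := fun s => dd v u x - dd v u (x + s • v)) (φ2 := - dd v (dd v u) x)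
    (by
      filter_upwards [line_mem hB hx v] with s hs
      have := grad_ineq hc hx hs (diffAt_of hB hu hx)
      simp at this
      simp [dd]
      linarith)
    (by
      filter_upwards [line_deriv_ev hB hu hx v] with s hs
      have := ((hasDerivAt_id s).mul_const (dd v u x)).sub hs
      refine this.congr_deriv ?_
      simp)
    ((line_deriv0 hB hu1 hx v).const_sub _)
  linarith [this.2]

set_option maxHeartbeats 2000000 in
theorem main_est (R m M K1 K2 K : ℝ) (hR : 0 < R) (hm : 0 < m) (hK1 : 0 ≤ K1) (hK2 : 0 ≤ K2)
    (hK : 0 ≤ K) : ∃ C : ℝ, 0 ≤ C ∧ ∀ u f : E2 → ℝ,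
      ContDiffOn ℝ ((4 : ℕ) : WithTop ℕ∞) u (ball 0 R) →
      ContDiffOn ℝ ((2 : ℕ) : WithTop ℕ∞) f (ball 0 R) →
      ConvexOn ℝ (ball 0 R) u →
      (∀ x ∈ ball (0 : E2) R, m ≤ f x ∧ f x ≤ M) →
      (∀ x ∈ ball (0 : E2) R,
          pd 0 (pd 0 u) x * pd 1 (pd 1 u) x - pd 0 (pd 1 u) x * pd 1 (pd 0 u) x =
            f x * (1 + ∑ k, (pd k u x) ^ 2) ^ 2) →
      (∀ x ∈ ball (0 : E2) R, ‖fderiv ℝ f x‖ ≤ K1) →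
      (∀ x ∈ ball (0 : E2) R, ‖iteratedFDeriv ℝ 2 f x‖ ≤ K2) →
      (∀ x ∈ ball (0 : E2) R, ‖fderiv ℝ u x‖ ≤ K) →
      ∀ v : E2, ‖v‖ = 1 → dd v (dd v u) 0 ≤ C := by
  obtain ⟨ε, ε0, hstrict⟩ := strict_conv R m (2 * K) hR hm (by positivity)
  set W0 := 1 + K * K + K * K with hW0
  set c1 := K2 * W0 ^ 2 + 8 * K1 * W0 * K + 4 * K1 * W0 ^ 2 * K with hc1
  set c2 := 2 * M * W0 ^ 2 + 16 * M * W0 * K ^ 2 + 8 * M * W0 ^ 2 * K ^ 2 + 4 * K1 * W0 ^ 2 * K with hc2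
  refine ⟨(ε + |ε * c1 + c2| / m) * Real.exp W0 / ε, by positivity, ?_⟩
  intro u f hu hf hconv hfm heq hfK1 hfK2 huK v hv
  set B := ball (0 : E2) R with hBdef
  have hB : IsOpen B := isOpen_ball
  have h0B : (0 : E2) ∈ B := mem_ball_self hR
  have hu1 : ∀ v, ContDiffOn ℝ ((3 : ℕ) : WithTop ℕ∞) (dd v u) B := fun v => dd_contDiffOn hB v hu
  have hu2 : ∀ v w, ContDiffOn ℝ ((2 : ℕ) : WithTop ℕ∞) (dd w (dd v u)) B :=
    fun v w => dd_contDiffOn hB w (hu1 v)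
  set G : E2 → ℝ := fun x => ∑ k, (pd k u x) ^ 2 with hG
  -- rotated equation
  have hrot : ∀ e : E2, ‖e‖ = 1 → ∀ y ∈ B, dd e (dd e u) y * dd (rotv e) (dd (rotv e) u) y -
      dd e (dd (rotv e) u) y * dd e (dd (rotv e) u) y =
      f y * (1 + dd e u y * dd e u y + dd (rotv e) u y * dd (rotv e) u y) ^ 2 := by
    intro e he y hy
    rw [hess_frame hB hu hy he, heq y hy, add_assoc, grad_frame he]
  have hddu : ∀ e : E2, ‖e‖ = 1 → ∀ y ∈ B, |dd e u y| ≤ K := by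
    intro e he y hy
    have := (fderiv ℝ u y).le_opNorm e
    rw [he, mul_one] at this
    exact this.trans (huK y hy)
  have hddf : ∀ e : E2, ‖e‖ = 1 → ∀ y ∈ B, |dd e f y| ≤ K1 := by
    intro e he y hy
    have := (fderiv ℝ f y).le_opNorm e
    rw [he, mul_one] at this
    exact this.trans (hfK1 y hy)
  have hddf2 : ∀ e : E2, ‖e‖ = 1 → ∀ y ∈ B, |dd e (dd e f) y| ≤ K2 := by
    intro e he y hy
    rw [dd_dd (n := 0) hB hf hy]
    have := (iteratedFDeriv ℝ 2 f y).le_opNorm ![e, e]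
    rw [iteratedFDeriv_two_apply] at this
    simp [he] at this
    exact this.trans (hfK2 y hy)
  have hnn : ∀ e : E2, ∀ y ∈ B, 0 ≤ dd e (dd e u) y := fun e y hy => hess_nonneg hB hu hconv hy e
  have hdetm : ∀ e : E2, ‖e‖ = 1 → ∀ y ∈ B,
      m ≤ dd e (dd e u) y * dd (rotv e) (dd (rotv e) u) y := by
    intro e he y hy
    have h1 := hrot e he y hy
    have h2 := hfm y hy
    have h3 : 1 ≤ (1 + dd e u y * dd e u y + dd (rotv e) u y * dd (rotv e) u y) ^ 2 :=
      one_le_pow₀ (by linarith [mul_self_nonneg (dd e u y), mul_self_nonneg (dd (rotv e) u y)])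
    have h4 : m * 1 ≤ f y * (1 + dd e u y * dd e u y + dd (rotv e) u y * dd (rotv e) u y) ^ 2 := by
      have : 0 ≤ f y := by linarith
      gcongr
      exact h2.1
    linarith [mul_self_nonneg (dd e (dd (rotv e) u) y)]
  have hpos : ∀ e : E2, ‖e‖ = 1 → ∀ y ∈ B, 0 < dd e (dd e u) y := by
    intro e he y hy
    refine lt_of_le_of_ne (hnn e y hy) ?_
    intro h
    have := hdetm e he y hy
    rw [← h] at this
    linarith
  -- the normalised function
  set T := fderiv ℝ u 0 with hT
  set w : E2 → ℝ := fun y => u y - u 0 - T y with hw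
  have hwC : ContDiffOn ℝ ((4 : ℕ) : WithTop ℕ∞) w B :=
    (hu.sub contDiffOn_const).sub T.contDiff.contDiffOn
  have hfw : ∀ y ∈ B, fderiv ℝ w y = fderiv ℝ u y - T := by
    intro y hy
    have h1 := ((diffAt_of hB hu hy).hasFDerivAt.sub_const (u 0)).sub T.hasFDerivAt
    exact h1.fderiv
  have hddw : ∀ e, ∀ y ∈ B, dd e w y = dd e u y - T e := by
    intro e y hy
    unfold dd
    rw [hfw y hy]; rfl
  have hddw2 : ∀ e, ∀ y ∈ B, dd e (dd e w) y = dd e (dd e u) y := by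
    intro e y hy
    rw [dd_congr hB (hddw e) hy e]
    have h1 := (diffAt_of hB (hu1 e) hy).hasFDerivAt.sub_const (T e)
    unfold dd at h1 ⊢
    rw [h1.fderiv]
  have hw0 : ∀ y ∈ B, 0 ≤ w y := by
    intro y hy
    have := grad_ineq hconv h0B hy (diffAt_of hB hu h0B)
    simp only [sub_zero] at this
    simp only [hw, hT]; linarith
  have hTK : ∀ e : E2, ‖e‖ = 1 → |T e| ≤ K := fun e he => hddu e he 0 h0B
  have hsub : ∀ e : E2, ‖e‖ = 1 → ∀ y ∈ B, |dd e u y - T e| ≤ 2 * K := by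
    intro e he y hy
    have h1 := abs_sub (dd e u y) (T e)
    linarith [hTK e he, hddu e he y hy]
  have hbd : ∀ y : E2, ‖y‖ = R / 2 → ε ≤ w y := by
    intro y hy
    by_contra! hlt
    have hyB : y ∈ B := by rw [hBdef, mem_ball_zero_iff, hy]; linarith
    have he : ‖(2 / R) • y‖ = 1 := by
      rw [norm_smul, hy, Real.norm_of_nonneg (by positivity)]; field_simp
    refine hstrict w ((2 / R) • y) (rotv ((2 / R) • y)) (hwC.of_le (by norm_cast)) he (rotv_norm he)
      (rotv_inner _) hw0 ?_ ?_ ?_ ?_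
    · intro x hx
      rw [hddw _ x hx]
      exact (le_abs_self _).trans (hsub _ (rotv_norm he) x hx)
    · intro x hx z hz
      rw [hfw x hx]
      have := grad_ineq hconv hx hz (diffAt_of hB hu hx)
      simp only [hw, _root_.sub_apply, map_sub] at this ⊢
      linarith
    · intro x hx
      rw [hddw2 _ x hx, hddw2 _ x hx]
      exact ⟨hnn _ x hx, hdetm _ he x hx⟩
    · intro s hs hs'
      have h1 : 0 ≤ s * (2 / R) := by positivity
      have h2 : s * (2 / R) ≤ 1 := by
        rw [← mul_div_assoc, div_le_one hR]; linarith
      have := hconv.2 h0B hyB (sub_nonneg.2 h2) h1 (by ring)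
      simp only [smul_zero, zero_add, smul_eq_mul] at this
      simp only [hw, smul_smul, map_smul, smul_eq_mul]
      simp only [hw] at hlt
      nlinarith [mul_le_mul_of_nonneg_left hlt.le h1]
  -- the maximum
  set η : E2 → ℝ := fun y => (ε + u 0) - u y + T y with hη
  have hηw : ∀ y, η y = ε - w y := by intro y; simp only [hη, hw]; ring
  set Φ : E2 × E2 → ℝ := fun z => η z.1 * fderiv ℝ (fderiv ℝ u) z.1 z.2 z.2 * Real.exp (G z.1 / 2)
    with hΦ
  have hfd1 : ContDiffOn ℝ ((3 : ℕ) : WithTop ℕ∞) (fderiv ℝ u) B :=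
    hu.fderiv_of_isOpen hB (by norm_cast)
  have hfd2 : ContDiffOn ℝ ((2 : ℕ) : WithTop ℕ∞) (fderiv ℝ (fderiv ℝ u)) B :=
    hfd1.fderiv_of_isOpen hB (by norm_cast)
  set D : Set (E2 × E2) := closedBall 0 (R / 2) ×ˢ sphere 0 1 with hD
  have hDB : ∀ z ∈ D, z.1 ∈ B := by
    intro z hz
    have := hz.1
    rw [mem_closedBall_zero_iff] at this
    rw [hBdef, mem_ball_zero_iff]; linarith
  have hDc : IsCompact D := (isCompact_closedBall _ _).prod (isCompact_sphere _ _)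
  have hcont : ContinuousOn Φ D := by
    have c0 : ContinuousOn (fun z : E2 × E2 => u z.1) D :=
      hu.continuousOn.comp continuousOn_fst hDB
    have c1 : ContinuousOn (fun z : E2 × E2 => fderiv ℝ (fderiv ℝ u) z.1) D :=
      hfd2.continuousOn.comp continuousOn_fst hDB
    have c2 : ∀ k, ContinuousOn (fun z : E2 × E2 => pd k u z.1) D :=
      fun k => (hu1 (EuclideanSpace.single k 1)).continuousOn.comp continuousOn_fst hDB
    have c3 : ContinuousOn (fun z : E2 × E2 => G z.1) D := by
      simp only [hG]
      exact continuousOn_finsetSum _ (fun k _ => (c2 k).pow 2)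
    simp only [hΦ, hη]
    refine ContinuousOn.mul (ContinuousOn.mul ?_ ?_) ?_
    · exact (continuousOn_const.sub c0).add (T.continuous.continuousOn.comp continuousOn_fst (fun _ _ => Set.mem_univ _))
    · exact (c1.clm_apply continuousOn_snd).clm_apply continuousOn_snd
    · exact Real.continuous_exp.comp_continuousOn (c3.div_const 2)
  have hvD : ((0 : E2), v) ∈ D := by
    refine ⟨?_, ?_⟩
    · simp; positivity
    · simpa using hv
  obtain ⟨⟨x, e⟩, hxe, hmax⟩ := hDc.exists_isMaxOn ⟨_, hvD⟩ hcont
  have hxB : x ∈ B := hDB (x, e) hxe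
  have he : ‖e‖ = 1 := by simpa using hxe.2
  have hH : ∀ y ∈ B, ∀ a b : E2, fderiv ℝ (fderiv ℝ u) y a b = dd a (dd b u) y :=
    fun y hy a b => (dd_dd hB hu hy a b).symm
  have hη00 : η 0 = ε := by simp [hη]
  have hΦ0 : Φ (0, v) = ε * dd v (dd v u) 0 * Real.exp (G 0 / 2) := by
    simp only [hΦ, hη00, hH 0 h0B]
  have hv0 := hpos v hv 0 h0B
  have hle := hmax hvD
  simp only [Set.mem_ofPred_eq] at hle
  have hΦpos : 0 < Φ (x, e) := lt_of_lt_of_le (by rw [hΦ0]; positivity) hle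
  have hΦx : Φ (x, e) = η x * dd e (dd e u) x * Real.exp (G x / 2) := by
    simp only [hΦ, hH x hxB]
  have hlpos := hpos e he x hxB
  have hηx : 0 < η x := by
    rw [hΦx, mul_assoc] at hΦpos
    exact (mul_pos_iff_of_pos_right (by positivity)).1 hΦpos
  have hηε : η x ≤ ε := by rw [hηw]; linarith [hw0 x hxB]
  have hxlt : ‖x‖ < R / 2 := by
    have h1 : ‖x‖ ≤ R / 2 := by simpa using hxe.1
    refine lt_of_le_of_ne h1 ?_
    intro h
    have := hbd x h
    rw [hηw] at hηx
    linarith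
  have hGe : ∀ e : E2, ‖e‖ = 1 → ∀ y, dd e u y * dd e u y + dd (rotv e) u y * dd (rotv e) u y = G y :=
    fun e he y => grad_frame he u y
  have hlm : IsLocalMax (fun y => η y * dd e (dd e u) y *
      Real.exp ((dd e u y * dd e u y + dd (rotv e) u y * dd (rotv e) u y) / 2)) x := by
    have hnb : ball (0 : E2) (R / 2) ∈ 𝓝 x := isOpen_ball.mem_nhds (by simpa using hxlt)
    filter_upwards [hnb] with y hy
    have hyD : (y, e) ∈ D := ⟨ball_subset_closedBall hy, hxe.2⟩
    have := hmax hyD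
    simp only [Set.mem_ofPred_eq, hΦ, hH x hxB, hH y (hDB (y, e) hyD)] at this
    rw [hGe e he, hGe e he]
    exact this
  -- e is an eigenvector
  have hquad : ∀ z : E2, dd z (dd z u) x ≤ ‖z‖ ^ 2 * dd e (dd e u) x := by
    intro z
    rcases eq_or_ne z 0 with rfl | hz
    · simp [dd]
    have hz' : 0 < ‖z‖ := norm_pos_iff.2 hz
    have hn : ‖(‖z‖⁻¹) • z‖ = 1 := by
      rw [norm_smul, norm_inv, norm_norm, inv_mul_cancel₀ hz'.ne']
    have := hmax (show (x, (‖z‖⁻¹) • z) ∈ D from ⟨hxe.1, by simpa using hn⟩)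
    simp only [Set.mem_ofPred_eq, hΦ] at this
    have h2 := le_of_mul_le_mul_left (le_of_mul_le_mul_right this (Real.exp_pos _)) hηx
    simp only [map_smul, _root_.smul_apply, smul_eq_mul, hH x hxB] at h2
    have h3 := mul_le_mul_of_nonneg_left h2 (by positivity : 0 ≤ ‖z‖ ^ 2)
    refine le_of_eq_of_le ?_ h3
    field_simp
  have h12 : dd e (dd (rotv e) u) x = 0 := by
    have hq : ∀ t : ℝ, 2 * t * dd e (dd (rotv e) u) x ≤
        t ^ 2 * (dd e (dd e u) x - dd (rotv e) (dd (rotv e) u) x) := by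
      intro t
      have h1 := hquad (e + t • rotv e)
      have h2 : ‖e + t • rotv e‖ ^ 2 = 1 + t ^ 2 := by
        rw [norm_add_sq_real, norm_smul, he, rotv_norm he, inner_smul_right, rotv_inner]
        simp
      rw [h2, ← hH x hxB] at h1
      simp only [map_add, map_smul, _root_.add_apply, _root_.smul_apply,
        smul_eq_mul, hH x hxB] at h1
      rw [dd_symm hB hu hxB (rotv e) e] at h1
      linarith
    generalize dd e (dd (rotv e) u) x = b at hq
    generalize dd e (dd e u) x - dd (rotv e) (dd (rotv e) u) x = d at hq
    have hd : 0 < |d| + 1 := by positivity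
    have h1 := hq (b / (|d| + 1))
    have h2 : (b / (|d| + 1)) ^ 2 * d ≤ (b / (|d| + 1)) ^ 2 * (|d| + 1) := by
      gcongr
      linarith [le_abs_self d]
    have h3 : (b / (|d| + 1)) ^ 2 * (|d| + 1) = b ^ 2 / (|d| + 1) := by field_simp
    have h4 : 2 * (b / (|d| + 1)) * b = 2 * (b ^ 2 / (|d| + 1)) := by field_simp
    have h5 : b ^ 2 / (|d| + 1) ≤ 0 := by linarith
    have h6 : b ^ 2 ≤ 0 := by
      by_contra! h
      exact absurd h5 (not_le.2 (by positivity))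
    exact pow_eq_zero_iff two_ne_zero |>.1 (le_antisymm h6 (sq_nonneg b))
  have hGx : G x ≤ K * K + K * K := by
    rw [← hGe e he x]
    have h1 := hddu e he x hxB
    have h2 := hddu _ (rotv_norm he) x hxB
    rw [← abs_mul_abs_self (dd e u x), ← abs_mul_abs_self (dd (rotv e) u x)]
    gcongr
  have hprod : η x * dd e (dd e u) x ≤ ε + |ε * c1 + c2| / m := by
    have hab : 0 ≤ |ε * c1 + c2| / m := by positivity
    rcases lt_or_ge (dd e (dd e u) x) 1 with hl | hl
    · have : η x * dd e (dd e u) x ≤ ε * 1 := by gcongr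
      linarith
    · have h1 := pog_point hB hxB hu hf (hrot e he) h12 (fun y => rfl) hηx hlm hl hm
        (hfm x hxB).1 (hfm x hxB).2 hK1 hK2 (hddu e he x hxB) (hddu _ (rotv_norm he) x hxB)
        (hsub e he x hxB) (hsub _ (rotv_norm he) x hxB) (hddf e he x hxB)
        (hddf _ (rotv_norm he) x hxB) (hddf2 e he x hxB)
        (W0 := W0) (by rw [add_assoc, hGe e he, hW0]; linarith)
      have hc10 : 0 ≤ c1 := by positivity
      have h2 : m * (η x * dd e (dd e u) x) ≤ ε * c1 + c2 := by
        refine h1.trans ?_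
        gcongr
      have h3 : η x * dd e (dd e u) x ≤ |ε * c1 + c2| / m := by
        rw [le_div_iff₀ hm]
        linarith [le_abs_self (ε * c1 + c2)]
      linarith
  have hexp : Real.exp (G x / 2) ≤ Real.exp W0 := by
    gcongr
    have : 0 ≤ K * K := by positivity
    rw [hW0]; linarith
  have hexp0 : 1 ≤ Real.exp (G 0 / 2) := by
    apply Real.one_le_exp
    have : 0 ≤ G 0 := Finset.sum_nonneg (fun k _ => sq_nonneg _)
    linarith
  rw [le_div_iff₀ ε0]
  calc dd v (dd v u) 0 * ε = ε * dd v (dd v u) 0 * 1 := by ring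
    _ ≤ ε * dd v (dd v u) 0 * Real.exp (G 0 / 2) := by gcongr
    _ ≤ η x * dd e (dd e u) x * Real.exp (G x / 2) := by rw [← hΦ0, ← hΦx]; exact hle
    _ ≤ _ := by gcongr

theorem hess_norm {B : Set E2} (hB : IsOpen B) {u : E2 → ℝ}
    (hu : ContDiffOn ℝ ((4 : ℕ) : WithTop ℕ∞) u B) {x : E2} (hx : x ∈ B) {C : ℝ} (hC : 0 ≤ C)
    (h0 : ∀ v, 0 ≤ dd v (dd v u) x) (h1 : ∀ v, ‖v‖ = 1 → dd v (dd v u) x ≤ C) :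
    ‖iteratedFDeriv ℝ 2 u x‖ ≤ C := by
  have hH : ∀ a b : E2, fderiv ℝ (fderiv ℝ u) x a b = dd a (dd b u) x :=
    fun a b => (dd_dd hB hu hx a b).symm
  have hs : ∀ a b : E2, fderiv ℝ (fderiv ℝ u) x a b = fderiv ℝ (fderiv ℝ u) x b a := by
    intro a b; rw [hH, hH, dd_symm hB hu hx]
  have hsc : ∀ z : E2, fderiv ℝ (fderiv ℝ u) x z z ≤ C * ‖z‖ ^ 2 := by
    intro z
    rcases eq_or_ne z 0 with rfl | hz
    · simp
    have hz' : 0 < ‖z‖ := norm_pos_iff.2 hz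
    have hn : ‖(‖z‖⁻¹) • z‖ = 1 := by
      rw [norm_smul, norm_inv, norm_norm, inv_mul_cancel₀ hz'.ne']
    have h2 := h1 _ hn
    rw [← hH] at h2
    simp only [map_smul, _root_.smul_apply, smul_eq_mul] at h2
    have h3 := mul_le_mul_of_nonneg_left h2 (by positivity : 0 ≤ ‖z‖ ^ 2)
    rw [mul_comm C]
    refine le_of_eq_of_le ?_ h3
    field_simp
  have hnn : ∀ z : E2, 0 ≤ fderiv ℝ (fderiv ℝ u) x z z := by intro z; rw [hH]; exact h0 z
  have hunit : ∀ a b : E2, ‖a‖ = 1 → ‖b‖ = 1 → |fderiv ℝ (fderiv ℝ u) x a b| ≤ C := by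
    intro a b ha hb
    have e1 := hsc (a + b)
    have e2 := hsc (a - b)
    have e3 := hnn (a + b)
    have e4 := hnn (a - b)
    have n1 : ‖a + b‖ ^ 2 ≤ 4 := by
      have := norm_add_le a b
      nlinarith [norm_nonneg (a + b)]
    have n2 : ‖a - b‖ ^ 2 ≤ 4 := by
      have := norm_sub_le a b
      nlinarith [norm_nonneg (a - b)]
    have e5 : C * ‖a + b‖ ^ 2 ≤ C * 4 := by gcongr
    have e6 : C * ‖a - b‖ ^ 2 ≤ C * 4 := by gcongr
    simp only [map_add, map_sub, _root_.add_apply, _root_.sub_apply] at e1 e2 e3 e4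
    rw [hs b a] at e1 e2 e3 e4
    rw [abs_le]
    constructor <;> linarith
  refine ContinuousMultilinearMap.opNorm_le_bound hC ?_
  intro w
  rw [iteratedFDeriv_two_apply, Fin.prod_univ_two, Real.norm_eq_abs]
  generalize w 0 = a
  generalize w 1 = b
  rcases eq_or_ne a 0 with rfl | ha
  · simp
  rcases eq_or_ne b 0 with rfl | hb
  · simp
  have ha' : 0 < ‖a‖ := norm_pos_iff.2 ha
  have hb' : 0 < ‖b‖ := norm_pos_iff.2 hb
  have h := hunit ((‖a‖⁻¹) • a) ((‖b‖⁻¹) • b)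
    (by rw [norm_smul, norm_inv, norm_norm, inv_mul_cancel₀ ha'.ne'])
    (by rw [norm_smul, norm_inv, norm_norm, inv_mul_cancel₀ hb'.ne'])
  simp only [map_smul, _root_.smul_apply, smul_eq_mul] at h
  rw [abs_mul, abs_mul, abs_of_pos (inv_pos.2 ha'), abs_of_pos (inv_pos.2 hb')] at h
  have h3 := mul_le_mul_of_nonneg_left h (by positivity : 0 ≤ ‖a‖ * ‖b‖)
  rw [mul_comm C]
  refine le_of_eq_of_le ?_ h3
  field_simp

/-- Interior C² estimate for the prescribed Gauss curvature equation in dimension two: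
there is a constant C, depending only on m, M, R, sup|∇f|, sup|∇²f| and sup|∇u|, such
that any C⁴ convex solution u of det ∇²u/(1+|∇u|²)² = f on B_R(0) with 0 < m ≤ f ≤ M
satisfies |∇²u(0)| ≤ C. -/
theorem stmt19 :
    ∃ C : ℝ → ℝ → ℝ → ℝ → ℝ → ℝ → ℝ,
      ∀ (R m M K₁ K₂ K₃ : ℝ) (u f : EuclideanSpace ℝ (Fin 2) → ℝ),
        0 < R → 0 < m →
        ContDiffOn ℝ 4 u (ball (0 : EuclideanSpace ℝ (Fin 2)) R) →
        ContDiffOn ℝ 2 f (ball (0 : EuclideanSpace ℝ (Fin 2)) R) →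
        ConvexOn ℝ (ball (0 : EuclideanSpace ℝ (Fin 2)) R) u →
        (∀ x ∈ ball (0 : EuclideanSpace ℝ (Fin 2)) R, m ≤ f x ∧ f x ≤ M) →
        (∀ x ∈ ball (0 : EuclideanSpace ℝ (Fin 2)) R,
          pd 0 (pd 0 u) x * pd 1 (pd 1 u) x - pd 0 (pd 1 u) x * pd 1 (pd 0 u) x =
            f x * (1 + ∑ k, (pd k u x) ^ 2) ^ 2) →
        (∀ x ∈ ball (0 : EuclideanSpace ℝ (Fin 2)) R, ‖fderiv ℝ f x‖ ≤ K₁) →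
        (∀ x ∈ ball (0 : EuclideanSpace ℝ (Fin 2)) R, ‖iteratedFDeriv ℝ 2 f x‖ ≤ K₂) →
        (∀ x ∈ ball (0 : EuclideanSpace ℝ (Fin 2)) R, ‖fderiv ℝ u x‖ ≤ K₃) →
        ‖iteratedFDeriv ℝ 2 u 0‖ ≤ C m M R K₁ K₂ K₃ := by
  classical
  have key : ∀ m M R K₁ K₂ K₃ : ℝ, ∃ C : ℝ, ∀ (u f : EuclideanSpace ℝ (Fin 2) → ℝ),
        0 < R → 0 < m →
        ContDiffOn ℝ 4 u (ball (0 : EuclideanSpace ℝ (Fin 2)) R) →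
        ContDiffOn ℝ 2 f (ball (0 : EuclideanSpace ℝ (Fin 2)) R) →
        ConvexOn ℝ (ball (0 : EuclideanSpace ℝ (Fin 2)) R) u →
        (∀ x ∈ ball (0 : EuclideanSpace ℝ (Fin 2)) R, m ≤ f x ∧ f x ≤ M) →
        (∀ x ∈ ball (0 : EuclideanSpace ℝ (Fin 2)) R,
          pd 0 (pd 0 u) x * pd 1 (pd 1 u) x - pd 0 (pd 1 u) x * pd 1 (pd 0 u) x =
            f x * (1 + ∑ k, (pd k u x) ^ 2) ^ 2) →
        (∀ x ∈ ball (0 : EuclideanSpace ℝ (Fin 2)) R, ‖fderiv ℝ f x‖ ≤ K₁) →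
        (∀ x ∈ ball (0 : EuclideanSpace ℝ (Fin 2)) R, ‖iteratedFDeriv ℝ 2 f x‖ ≤ K₂) →
        (∀ x ∈ ball (0 : EuclideanSpace ℝ (Fin 2)) R, ‖fderiv ℝ u x‖ ≤ K₃) →
        ‖iteratedFDeriv ℝ 2 u 0‖ ≤ C := by
    intro m M R K₁ K₂ K₃
    by_cases hR : 0 < R
    swap
    · exact ⟨0, fun u f h => absurd h hR⟩
    by_cases hm : 0 < m
    swap
    · exact ⟨0, fun u f _ h => absurd h hm⟩
    obtain ⟨C, hC, H⟩ := main_est R m M |K₁| |K₂| |K₃| hR hm (abs_nonneg _) (abs_nonneg _)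
      (abs_nonneg _)
    refine ⟨C, ?_⟩
    intro u f _ _ hu hf hc hfm heq h1 h2 h3
    have hu' : ContDiffOn ℝ ((4 : ℕ) : WithTop ℕ∞) u (ball (0 : E2) R) := by exact_mod_cast hu
    have hf' : ContDiffOn ℝ ((2 : ℕ) : WithTop ℕ∞) f (ball (0 : E2) R) := by exact_mod_cast hf
    exact hess_norm isOpen_ball hu' (mem_ball_self hR) hC
      (fun v => hess_nonneg isOpen_ball hu' hc (mem_ball_self hR) v)
      (H u f hu' hf' hc hfm heq (fun x hx => (h1 x hx).trans (le_abs_self _))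
        (fun x hx => (h2 x hx).trans (le_abs_self _)) (fun x hx => (h3 x hx).trans (le_abs_self _)))
  choose C hC using key
  exact ⟨C, fun R m M K₁ K₂ K₃ u f h1 h2 => hC m M R K₁ K₂ K₃ u f h1 h2⟩
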